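/- Let G be a finite simple graph whose complement is not bipartite. Then the closed neighborhood hypergraph N[G] is a circular-arc hypergraph if and only if G is a proper circular-arc graph. -/

import Mathlib

/-!
The argument uses the clockwise distance `d x y` on a circle with `n` points (`IsCyc`): it
satisfies `d x y + d y z = d x z` up to one extra turn `n`, an arc starting at `a` is
`{x | d a x < k}`, and questions about circular order become linear arithmetic.

*From an arc model to an arc ordering.* The start points of pairwise incomparable arcs are
distinct; order the vertices by them. The vertices whose start lies in the arc of `v` follow `v`
consecutively, and those whose arc contains the start of `v` precede `v` consecutively, since a
vertex starting in between whose arc stopped before `v` would have its arc inside another one.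
So every closed neighborhood is an arc (`PCA_to_arcOrdering`).

*From an arc ordering to an arc model.* The key fact is `IsCyc.not_split`: if every vertex of
`[u, v)` were in `N[u]` and every vertex of `[v, u)` in `N[v]`, the complement would be bipartite.
Indeed the non-neighbors of `x ∈ [u, v)` form an arc missing both `u` and `x`, so they all lie on
one side of `x` on the circle cut open at `u`: all before `x` (type B) or all after `x` (type A). For `x ∈ [v, u)`
the same holds with the circle cut at `v`. The vertices of `[u, v)` of type A together with
the vertices of `[v, u)` of type B are a color class of a 2-coloring of the complement.
The case `u = v` shows that no vertex is universal. Hence `N[v] = [v - p v, v + q v]` is a proper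
arc, and the case `u ≠ v` shows that `v` lies in the forward part `[u, u + q u]` of `N[u]` exactly
when `u` lies in the backward part of `N[v]` (`IsCyc.forward_to_backward`, applied to `d` and to
the reversed distance). The forward parts then form an intersection model of the graph in which
inclusions occur only between arcs with a common end point; stretching the circle by a factor
`n + 1` leaves room to separate these end points (`arcOrdering_to_PCA`).
-/

open Set

/-- The closed neighborhood of a vertex: the vertex together with its neighbors. -/
def ClosedNbhd {V : Type*} (G : SimpleGraph V) (v : V) : Set V :=
  {u | u = v ∨ G.Adj u v}

/-- `S` is an interval (order-convex set) with respect to the order relation `r`. -/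
def IsIntervalWrt {α : Type*} (r : α → α → Prop) (S : Set α) : Prop :=
  ∀ x y z, r x y → r y z → x ∈ S → z ∈ S → y ∈ S

/-- A family of hyperedges forms an interval hypergraph: some linear order on the
vertices makes every hyperedge an interval (a set of consecutive elements). -/
def IsIntervalHypergraph {α ι : Type*} (H : ι → Set α) : Prop :=
  ∃ r : α → α → Prop, IsLinearOrder α r ∧ ∀ i, IsIntervalWrt r (H i)

/-- `S ⊆ ZMod n` is an arc: a set of (at most `n`) circularly consecutive points. -/
def IsArc (n : ℕ) (S : Set (ZMod n)) : Prop :=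
  ∃ a : ZMod n, ∃ k : ℕ, k ≤ n ∧ S = {x | ∃ i : ℕ, i < k ∧ x = a + (i : ZMod n)}

/-- Arcs `A` and `B` share their start point: some point is a start point of both. -/
def SharesStart (n : ℕ) (A B : Set (ZMod n)) : Prop :=
  ∃ a, a ∈ A ∧ a - 1 ∉ A ∧ a ∈ B ∧ a - 1 ∉ B

/-- Arcs `A` and `B` share their end point: some point is an end point of both. -/
def SharesEnd (n : ℕ) (A B : Set (ZMod n)) : Prop :=
  ∃ a, a ∈ A ∧ a + 1 ∉ A ∧ a ∈ B ∧ a + 1 ∉ B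

/-- `G` is a proper interval graph: it has an intersection model consisting of
nonempty integer intervals that are pairwise incomparable under inclusion. -/
def IsProperIntervalGraph {V : Type*} (G : SimpleGraph V) : Prop :=
  ∃ l : V → Set ℤ,
    (∀ v, ∃ a b : ℤ, a ≤ b ∧ l v = Set.Icc a b) ∧
    (∀ u v, u ≠ v → ¬ l u ⊆ l v) ∧
    (∀ u v, u ≠ v → (G.Adj u v ↔ (l u ∩ l v).Nonempty))

/-- `G` is a circular-arc graph: it has an intersection model consisting of
nonempty arcs of some circle `ZMod n`. -/
def IsCAGraph {V : Type*} (G : SimpleGraph V) : Prop :=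
  ∃ n : ℕ, 0 < n ∧ ∃ l : V → Set (ZMod n),
    Function.Injective l ∧
    (∀ v, (l v).Nonempty ∧ IsArc n (l v)) ∧
    (∀ u v, u ≠ v → (G.Adj u v ↔ (l u ∩ l v).Nonempty))

/-- `G` is a proper circular-arc graph: it has an intersection model consisting of
nonempty arcs of some circle `ZMod n`, pairwise incomparable under inclusion. -/
def IsPCAGraph {V : Type*} (G : SimpleGraph V) : Prop :=
  ∃ n : ℕ, 0 < n ∧ ∃ l : V → Set (ZMod n),
    Function.Injective l ∧
    (∀ v, (l v).Nonempty ∧ IsArc n (l v)) ∧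
    (∀ u v, u ≠ v → ¬ l u ⊆ l v) ∧
    (∀ u v, u ≠ v → (G.Adj u v ↔ (l u ∩ l v).Nonempty))

/-- `G` is bipartite: the vertex set splits into two independent sets. -/
def IsBipartite {V : Type*} (G : SimpleGraph V) : Prop :=
  ∃ U : Set V, (∀ u ∈ U, ∀ v ∈ U, ¬ G.Adj u v) ∧ (∀ u ∉ U, ∀ v ∉ U, ¬ G.Adj u v)

/-! ### Clockwise distance -/

/-- `d` behaves like the clockwise distance between points on a circle with `n` points. -/
structure IsCyc {V : Type*} (n : ℕ) (d : V → V → ℕ) : Prop where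
  lt : ∀ x y, d x y < n
  tri : ∀ x y z, d x y + d y z = d x z ∨ d x y + d y z = d x z + n
  eq_of_zero : ∀ x y, d x y = 0 → x = y

namespace IsCyc

variable {V : Type*} {n : ℕ} {d : V → V → ℕ}

lemma self (h : IsCyc n d) (x : V) : d x x = 0 := by
  have := h.tri x x x
  have := h.lt x x
  omega

lemma symm_add (h : IsCyc n d) {x y : V} (hxy : x ≠ y) : d x y + d y x = n := by
  have := h.tri x y x
  have := h.self x
  have : d x y ≠ 0 := fun h0 => hxy (h.eq_of_zero _ _ h0)
  omega

lemma pos (h : IsCyc n d) {x y : V} (hxy : x ≠ y) : 0 < d x y :=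
  Nat.pos_of_ne_zero fun h0 => hxy (h.eq_of_zero _ _ h0)

lemma eq_of_eq (h : IsCyc n d) {x y z : V} (hxy : d x y = d x z) : y = z := by
  have := h.tri x y z
  have := h.lt y z
  exact h.eq_of_zero _ _ (by omega)

/-- Reversing the orientation of the circle. -/
lemma swap (h : IsCyc n d) : IsCyc n (fun x y => d y x) where
  lt x y := h.lt y x
  tri x y z := by
    have := h.tri z y x
    omega
  eq_of_zero x y hxy := (h.eq_of_zero _ _ hxy).symm

lemma comp {W : Type*} (h : IsCyc n d) {f : W → V} (hf : Function.Injective f) :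
    IsCyc n (fun x y => d (f x) (f y)) where
  lt _ _ := h.lt _ _
  tri _ _ _ := h.tri _ _ _
  eq_of_zero _ _ hxy := hf (h.eq_of_zero _ _ hxy)

end IsCyc

/-- Clockwise distance on `ZMod n`. -/
def zd {n : ℕ} (x y : ZMod n) : ℕ := (y - x).val

lemma zd_cyc (n : ℕ) [NeZero n] : IsCyc n (zd (n := n)) where
  lt x y := ZMod.val_lt _
  tri x y z := by
    have h : z - x = (y - x) + (z - y) := by ring
    simp only [zd]
    rw [h]
    rcases lt_or_ge ((y - x).val + (z - y).val) n with h1 | h1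
    · left
      rw [ZMod.val_add_of_lt h1]
    · right
      rw [ZMod.val_add_val_of_le h1]
  eq_of_zero x y h := (sub_eq_zero.1 ((ZMod.val_eq_zero _).1 h)).symm

lemma zd_add_natCast {n : ℕ} [NeZero n] (a : ZMod n) {i : ℕ} (hi : i < n) :
    zd a (a + (i : ZMod n)) = i := by
  simp [zd, ZMod.val_natCast_of_lt hi]

lemma add_zd {n : ℕ} [NeZero n] (a b : ZMod n) : a + ((zd a b : ℕ) : ZMod n) = b := by
  simp [zd]

lemma zd_sub_natCast {n : ℕ} [NeZero n] (a : ZMod n) {i : ℕ} (hi : i < n) :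
    zd (a - (i : ZMod n)) a = i := by
  simp [zd, ZMod.val_natCast_of_lt hi]

lemma isArc_iff {n : ℕ} [NeZero n] (S : Set (ZMod n)) :
    IsArc n S ↔ ∃ a : ZMod n, ∃ k : ℕ, k ≤ n ∧ ∀ x, x ∈ S ↔ zd a x < k := by
  have key : ∀ (a : ZMod n) (k : ℕ), k ≤ n → ∀ x,
      (∃ i : ℕ, i < k ∧ x = a + (i : ZMod n)) ↔ zd a x < k := by
    intro a k hk x
    constructor
    · rintro ⟨i, hi, rfl⟩
      rwa [zd_add_natCast a (by omega)]
    · intro h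
      exact ⟨_, h, (add_zd a x).symm⟩
  constructor
  · rintro ⟨a, k, hk, rfl⟩
    exact ⟨a, k, hk, fun x => key a k hk x⟩
  · rintro ⟨a, k, hk, h⟩
    refine ⟨a, k, hk, ?_⟩
    ext x
    rw [h, mem_ofPred_eq, key a k hk]

lemma arcs_inter {n : ℕ} [NeZero n] {a b : ZMod n} {k l : ℕ} (hk : 0 < k) (hl : 0 < l) :
    (∃ x, zd a x < k ∧ zd b x < l) ↔ (zd a b < k ∨ zd b a < l) := by
  have c := zd_cyc n
  constructor
  · rintro ⟨x, h1, h2⟩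
    have := c.tri a b x
    have := c.tri b a x
    have := c.lt a b
    have := c.lt b x
    have := c.tri a b a
    have := c.self a
    omega
  · rintro (h | h)
    · exact ⟨b, h, by rwa [c.self]⟩
    · exact ⟨a, by rwa [c.self], h⟩

lemma arcs_sub {n : ℕ} [NeZero n] {a b : ZMod n} {k l : ℕ} (hk : 0 < k) (hl : l < n)
    (h : ∀ x, zd a x < k → zd b x < l) : zd b a + k ≤ l := by
  have c := zd_cyc n
  by_contra hc
  have h1 := h a (by rwa [c.self])
  -- the first point after the arc at `b` lies in the arc at `a`
  have h2 := h (b + (l : ZMod n))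
  have h3 := zd_add_natCast b hl
  have := c.tri b a (b + (l : ZMod n))
  have := c.lt a (b + (l : ZMod n))
  omega

/-! ### From an arc ordering to an arc model -/

section Ordering

variable {V : Type*} {n : ℕ} {d : V → V → ℕ} {G : SimpleGraph V}

lemma mem_closedNbhd_comm {u v : V} : u ∈ ClosedNbhd G v ↔ v ∈ ClosedNbhd G u := by
  simp only [ClosedNbhd, mem_ofPred_eq]
  rw [eq_comm, G.adj_comm]

lemma self_mem_closedNbhd (v : V) : v ∈ ClosedNbhd G v := Or.inl rfl

lemma compl_adj_not_mem {u v : V} (h : Gᶜ.Adj u v) : v ∉ ClosedNbhd G u := by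
  rw [SimpleGraph.compl_adj] at h
  rintro (h1 | h1)
  · exact h.1 h1.symm
  · exact h.2 h1.symm

/-- The set `S` is not separated on the circle by its complement: two points `y`, `z` outside `S`
never lie on different sides of a chord joining points `a`, `b` of `S`. -/
def CycConvex (d : V → V → ℕ) (S : Set V) : Prop :=
  ∀ a b y z, a ∈ S → b ∈ S → y ∉ S → z ∉ S → d a y < d a b → ¬ d a b < d a z

lemma CycConvex.swap (hd : IsCyc n d) {S : Set V} (h : CycConvex d S) :
    CycConvex (fun x y => d y x) S := by
  intro a b y z ha hb hy hz h1 h2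
  have hay : a ≠ y := fun e => hy (e ▸ ha)
  have haz : a ≠ z := fun e => hz (e ▸ ha)
  have hab : a ≠ b := by
    rintro rfl
    have := hd.self a
    simp only at h1
    omega
  have := hd.symm_add hay
  have := hd.symm_add haz
  have := hd.symm_add hab
  simp only at h1 h2
  exact h a b z y ha hb hz hy (by omega) (by omega)

/-- If `[u, v)` lies in `N[u]` and `[v, u)` lies in `N[v]`, the complement is bipartite. For `u = v`
the arc `[u, v)` is empty and `[v, u)` is the whole circle. -/
lemma IsCyc.not_split (hd : IsCyc n d) (hnb : ¬ IsBipartite Gᶜ)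
    (hconv : ∀ x, CycConvex d (ClosedNbhd G x)) (u v : V)
    (hA : ∀ x, d u x < d u v → x ∈ ClosedNbhd G u)
    (hB : ∀ x, d u v ≤ d u x → x ∈ ClosedNbhd G v) : False := by
  classical
  apply hnb
  -- `After w x`: some non-neighbor of `x` comes after `x` on the circle cut open at `w`
  let After : V → V → Prop := fun w x => ∃ y, y ∉ ClosedNbhd G x ∧ d w x < d w y
  have hafter : ∀ w x, w ∈ ClosedNbhd G x → After w x →
      ∀ y, y ∉ ClosedNbhd G x → d w x < d w y := by
    rintro w x hw ⟨z, hz, hz'⟩ y hy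
    by_contra hc
    have hne : d w x ≠ d w y := by
      intro e
      have := hd.eq_of_eq e
      exact hy (this ▸ self_mem_closedNbhd x)
    exact hconv x w x y z hw (self_mem_closedNbhd x) hy hz (by omega) hz'
  have hbefore : ∀ w x, ¬ After w x →
      ∀ y, y ∉ ClosedNbhd G x → d w y ≤ d w x := by
    intro w x h y hy
    by_contra hc
    exact h ⟨y, hy, by omega⟩
  have hne : ∀ w x y, y ∉ ClosedNbhd G x → d w x ≠ d w y := by
    intro w x y hy e
    exact hy (hd.eq_of_eq e ▸ self_mem_closedNbhd x)
  have hA' : ∀ x, d u x < d u v → u ∈ ClosedNbhd G x := fun x hx =>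
    mem_closedNbhd_comm.1 (hA x hx)
  have hB' : ∀ x, d u v ≤ d u x → v ∈ ClosedNbhd G x := fun x hx =>
    mem_closedNbhd_comm.1 (hB x hx)
  -- on the circle cut open at `v`, the arc `[v, u)` precedes `[u, v)`; hence no complement edge
  -- joins `[u, v)` to a vertex of `[v, u)` whose non-neighbors all come before it
  have hcross : ∀ x y, d u x < d u v → d u v ≤ d u y → d v y < d v x := by
    intro x y hx hy
    have := hd.tri u v y
    have := hd.tri u v x
    have := hd.lt v y
    have := hd.lt v x
    have := hd.lt u y
    have := hd.lt u x
    omega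
  refine ⟨{x | (d u x < d u v ∧ After u x) ∨ (d u v ≤ d u x ∧ ¬ After v x)}, ?_, ?_⟩
  · rintro x hx y hy hadj
    have hxy := compl_adj_not_mem hadj
    have hyx := compl_adj_not_mem hadj.symm
    rcases hx with ⟨hx1, hx2⟩ | ⟨hx1, hx2⟩ <;> rcases hy with ⟨hy1, hy2⟩ | ⟨hy1, hy2⟩
    · have := hafter u x (hA' x hx1) hx2 y hxy
      have := hafter u y (hA' y hy1) hy2 x hyx
      omega
    · have := hbefore v y hy2 x hyx
      have := hcross x y hx1 hy1
      omega
    · have := hbefore v x hx2 y hxy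
      have := hcross y x hy1 hx1
      omega
    · have := hbefore v x hx2 y hxy
      have := hbefore v y hy2 x hyx
      have := hne v x y hxy
      omega
  · rintro x hx y hy hadj
    have hxy := compl_adj_not_mem hadj
    have hyx := compl_adj_not_mem hadj.symm
    simp only [mem_ofPred_eq, not_or, not_and, not_not] at hx hy
    obtain ⟨hx1, hx2⟩ := hx
    obtain ⟨hy1, hy2⟩ := hy
    rcases lt_or_ge (d u x) (d u v) with hx | hx <;> rcases lt_or_ge (d u y) (d u v) with hy | hy
    · have := hbefore u x (hx1 hx) y hxy
      have := hbefore u y (hy1 hy) x hyx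
      have := hne u x y hxy
      omega
    · have := hbefore u x (hx1 hx) y hxy
      omega
    · have := hbefore u y (hy1 hy) x hyx
      omega
    · have := hafter v x (hB' x hx) (hx2 hx) y hxy
      have := hafter v y (hB' y hy) (hy2 hy) x hyx
      omega

/-- With `N[v] = [v - p v, v + q v]` for all `v`: if `v` lies in the forward part of `N[u]`, then `u`
lies in the backward part of `N[v]`. -/
lemma IsCyc.forward_to_backward (hd : IsCyc n d) (hnb : ¬ IsBipartite Gᶜ)
    (hconv : ∀ x, CycConvex d (ClosedNbhd G x)) {p q : V → ℕ}
    (hpq : ∀ v u, u ∈ ClosedNbhd G v ↔ d v u ≤ q v ∨ d u v ≤ p v) {u v : V}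
    (h : d u v ≤ q u) : d u v ≤ p v := by
  by_contra hc
  have h1 : d v u ≤ q v := by
    have : u ∈ ClosedNbhd G v := mem_closedNbhd_comm.1 ((hpq u v).2 (Or.inl h))
    exact ((hpq v u).1 this).resolve_right hc
  refine hd.not_split hnb hconv u v (fun x hx => ?_) (fun x hx => ?_)
  · exact (hpq u x).2 (Or.inl (by omega))
  · refine (hpq v x).2 (Or.inl ?_)
    have := hd.tri u v x
    have := hd.tri u v u
    have := hd.self u
    have := hd.lt u x
    have := hd.lt v x
    have : u ≠ v := by
      rintro rfl
      omega
    have := hd.symm_add this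
    omega

end Ordering

/-- An arc is convex for the clockwise distance. -/
lemma arc_convex {V : Type*} {n : ℕ} [NeZero n] {f : V → ZMod n}
    {S : Set V} {a : ZMod n} {k : ℕ} (h : ∀ u, u ∈ S ↔ zd a (f u) < k) :
    CycConvex (fun x y => zd (f x) (f y)) S := by
  intro w x y z hw hx hy hz h1 h2
  rw [h] at hw hx hy hz
  have c := zd_cyc n
  have := c.tri a (f w) (f x)
  have := c.tri a (f w) (f y)
  have := c.tri a (f w) (f z)
  have := c.lt (f w) (f x)
  have := c.lt (f w) (f y)
  have := c.lt (f w) (f z)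
  have := c.lt a (f w)
  have := c.lt a (f x)
  have := c.lt a (f y)
  have := c.lt a (f z)
  simp only at h1 h2
  omega

lemma arcOrdering_to_PCA {V : Type*} {n : ℕ} [NeZero n] (G : SimpleGraph V)
    (hnb : ¬ IsBipartite Gᶜ) (f : V ≃ ZMod n)
    (hf : ∀ v, IsArc n (f '' ClosedNbhd G v)) : IsPCAGraph G := by
  have c := zd_cyc n
  have hn : 0 < n := Nat.pos_of_ne_zero (NeZero.ne n)
  let d : V → V → ℕ := fun x y => zd (f x) (f y)
  have hd : IsCyc n d := c.comp f.injective
  have harc : ∀ v, ∃ a k, k ≤ n ∧ ∀ u, u ∈ ClosedNbhd G v ↔ zd a (f u) < k := by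
    intro v
    obtain ⟨a, k, hk, h⟩ := (isArc_iff _).1 (hf v)
    refine ⟨a, k, hk, fun u => ?_⟩
    rw [← h, f.injective.mem_set_image]
  have hconv : ∀ x, CycConvex d (ClosedNbhd G x) := by
    intro x
    obtain ⟨a, k, hk, h⟩ := harc x
    exact arc_convex h
  have hpq : ∀ v, ∃ p q, q + 2 ≤ n ∧ ∀ u, u ∈ ClosedNbhd G v ↔ d v u ≤ q ∨ d u v ≤ p := by
    intro v
    obtain ⟨a, k, hk, h⟩ := harc v
    have hv := (h v).1 (self_mem_closedNbhd v)
    have hkn : k < n := by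
      rcases hk.lt_or_eq with hk | rfl
      · exact hk
      · have hu : ∀ x, x ∈ ClosedNbhd G v := fun x => (h x).2 (c.lt _ _)
        exact (hd.not_split hnb hconv v v (fun x _ => hu x) (fun x _ => hu x)).elim
    refine ⟨zd a (f v), k - 1 - zd a (f v), by omega, fun u => ?_⟩
    rw [h]
    have := c.tri a (f v) (f u)
    have := c.tri a (f u) (f v)
    have := c.lt (f v) (f u)
    have := c.lt (f u) (f v)
    have := c.tri (f u) (f v) (f u)
    have := c.self (f u)
    have := c.lt a (f u)
    change _ ↔ zd (f v) (f u) ≤ _ ∨ zd (f u) (f v) ≤ _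
    omega
  choose p q hq hpq using hpq
  have hfb : ∀ u v, d u v ≤ q u → d u v ≤ p v := fun u v h =>
    hd.forward_to_backward hnb hconv hpq h
  have hbf : ∀ u v, d u v ≤ p v → d u v ≤ q u := fun u v h =>
    hd.swap.forward_to_backward hnb (fun x => (hconv x).swap hd) (p := q) (q := p)
      (fun v u => (hpq v u).trans or_comm) h
  have hNpos : 0 < n * (n + 1) := by positivity
  have : NeZero (n * (n + 1)) := ⟨hNpos.ne'⟩
  have C := zd_cyc (n * (n + 1))
  let s : V → ZMod (n * (n + 1)) := fun v => (((n + 1) * (f v).val : ℕ) : ZMod (n * (n + 1)))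
  have hs : ∀ u v, zd (s u) (s v) = (n + 1) * d u v := by
    intro u v
    have h1 : (n + 1) * d u v < n * (n + 1) := by
      rw [mul_comm n]
      exact Nat.mul_lt_mul_of_pos_left (hd.lt u v) (by omega)
    have h2 : s v = s u + (((n + 1) * d u v : ℕ) : ZMod (n * (n + 1))) := by
      have h3 : (f v).val = (f u).val + d u v ∨ (f v).val + n = (f u).val + d u v := by
        have := c.tri 0 (f u) (f v)
        simp only [zd, sub_zero] at this
        change (f u).val + d u v = _ ∨ (f u).val + d u v = _ at this
        omega
      simp only [s]
      rw [← Nat.cast_add, ← mul_add]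
      rcases h3 with h3 | h3
      · rw [h3]
      · rw [← h3, mul_add _ _ n, mul_comm (n + 1) n, Nat.cast_add, ZMod.natCast_self, add_zero]
    rw [h2, zd_add_natCast _ h1]
  -- On the stretched circle `v` starts at `(n + 1) * f v`. This length puts the end of its arc in
  -- the block of `v + q v`, earlier in the block the larger `q v` is, so no two ends coincide.
  let k : V → ℕ := fun v => n * (q v + 1)
  have hk0 : ∀ v, 0 < k v := fun v => by positivity
  have hkN : ∀ v, k v < n * (n + 1) := fun v =>
    Nat.mul_lt_mul_of_pos_left (by have := hq v; omega) hn
  have hmem : ∀ u v, zd (s u) (s v) < k u ↔ d u v ≤ q u := by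
    intro u v
    rw [hs]
    have := hd.lt u v
    constructor
    · intro h
      by_contra hc
      have : n * (q u + 1) ≤ n * d u v := Nat.mul_le_mul_left _ (by omega)
      simp only [k] at h
      nlinarith
    · intro h
      have : n * d u v ≤ n * q u := Nat.mul_le_mul_left _ h
      simp only [k]
      nlinarith
  let l : V → Set (ZMod (n * (n + 1))) := fun v => {x | zd (s v) x < k v}
  have hinc : ∀ u v, u ≠ v → ¬ l u ⊆ l v := by
    intro u v huv hsub
    have h1 := arcs_sub (hk0 u) (hkN v) (fun x hx => hsub hx)
    rw [hs] at h1
    have h0 := hd.pos huv.symm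
    have h2 : d v u + q u < q v := by
      by_contra hc
      have : n * q v ≤ n * (d v u + q u) := Nat.mul_le_mul_left _ (by omega)
      simp only [k] at h1
      nlinarith
    -- the last forward neighbor of `v` is also a forward neighbor of `u`
    let e : V := f.symm (f v + (q v : ZMod n))
    have he : d v e = q v := by
      simp only [d, e, Equiv.apply_symm_apply]
      exact zd_add_natCast _ (by have := hq v; omega)
    have h3 := hfb v e he.le
    have h4 := hd.tri v u e
    have := hd.lt u e
    have h5 := hbf u e (by omega)
    omega
  refine ⟨n * (n + 1), hNpos, l, ?_, ?_, hinc, ?_⟩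
  · intro u v huv
    by_contra hne
    exact hinc u v hne huv.subset
  · intro v
    refine ⟨⟨s v, ?_⟩, (isArc_iff _).2 ⟨s v, k v, (hkN v).le, fun x => Iff.rfl⟩⟩
    simp only [l, mem_ofPred_eq, C.self]
    exact hk0 v
  · intro u v huv
    have h1 : (l u ∩ l v).Nonempty ↔ ∃ x, zd (s u) x < k u ∧ zd (s v) x < k v := Iff.rfl
    rw [h1, arcs_inter (hk0 u) (hk0 v), hmem, hmem]
    have h2 : G.Adj u v ↔ v ∈ ClosedNbhd G u := by
      simp only [ClosedNbhd, mem_ofPred_eq, huv.symm, false_or]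
      exact G.adj_comm u v
    rw [h2, hpq]
    exact or_congr_right ⟨hbf v u, hfb v u⟩

/-! ### From an arc model to an arc ordering -/

/-- A set containing `c`, each of whose points is joined to `c` inside the set clockwise or
counterclockwise, is an arc. -/
lemma isArc_of_star {n : ℕ} [NeZero n] (T : Set (ZMod n)) (c : ZMod n) (hc : c ∈ T)
    (h : ∀ b ∈ T, (∀ y, zd c y ≤ zd c b → y ∈ T) ∨
      (∀ y, y ≠ c → zd c b ≤ zd c y → y ∈ T)) : IsArc n T := by
  classical
  have hd := zd_cyc n
  rw [isArc_iff]
  by_cases hT : ∀ x, x ∈ T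
  · exact ⟨c, n, le_rfl, fun x => ⟨fun _ => hd.lt _ _, fun _ => hT x⟩⟩
  push Not at hT
  obtain ⟨x₀, hx₀⟩ := hT
  have e1 : ∃ i : ℕ, c + (i : ZMod n) ∉ T := ⟨zd c x₀, by rwa [add_zd]⟩
  have e2 : ∃ j : ℕ, c - (j : ZMod n) ∉ T := by
    refine ⟨zd x₀ c, ?_⟩
    have : c - ((zd x₀ c : ℕ) : ZMod n) = x₀ := by
      simp [zd]
    rwa [this]
  -- the first points outside `T` after `c` and before `c`
  obtain ⟨k₁, hk₁, hm₁⟩ : ∃ k : ℕ, c + (k : ZMod n) ∉ T ∧ ∀ i < k, c + (i : ZMod n) ∈ T :=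
    ⟨Nat.find e1, Nat.find_spec e1, fun i hi => not_not.1 (Nat.find_min e1 hi)⟩
  obtain ⟨k₂, hk₂, hm₂⟩ : ∃ k : ℕ, c - (k : ZMod n) ∉ T ∧ ∀ i < k, c - (i : ZMod n) ∈ T :=
    ⟨Nat.find e2, Nat.find_spec e2, fun i hi => not_not.1 (Nat.find_min e2 hi)⟩
  have hk₂0 : 0 < k₂ := by
    rcases Nat.eq_zero_or_pos k₂ with h0 | h0
    · subst h0
      simp [hc] at hk₂
    · exact h0
  have hk₁0 : 0 < k₁ := by
    rcases Nat.eq_zero_or_pos k₁ with h0 | h0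
    · subst h0
      simp [hc] at hk₁
    · exact h0
  have hk₁n : k₁ < n := by
    by_contra hlt
    have := hm₁ (zd c x₀) (lt_of_lt_of_le (hd.lt _ _) (not_lt.1 hlt))
    rw [add_zd] at this
    exact hx₀ this
  have hsum : k₁ + k₂ ≤ n := by
    by_contra hlt
    have := hm₂ (n - k₁) (by omega)
    rw [Nat.cast_sub hk₁n.le] at this
    simp [hk₁] at this
  have hp : zd c (c + (k₁ : ZMod n)) = k₁ := zd_add_natCast _ hk₁n
  have hr : zd (c - (k₂ : ZMod n)) c = k₂ := zd_sub_natCast _ (by omega)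
  have ha : zd (c - ((k₂ - 1 : ℕ) : ZMod n)) c = k₂ - 1 := zd_sub_natCast _ (by omega)
  set a := c - ((k₂ - 1 : ℕ) : ZMod n) with hadef
  refine ⟨a, k₁ + k₂ - 1, by omega, fun x => ⟨fun hx => ?_, fun hx => ?_⟩⟩
  · have t1 := hd.tri a c x
    have := hd.lt c x
    have := hd.lt a x
    rcases h x hx with h1 | h1
    · have : zd c x < k₁ := by
        by_contra hge
        exact hk₁ (h1 _ (by omega))
      omega
    · by_cases hxc : x = c
      · subst hxc
        omega
      have hne : c - (k₂ : ZMod n) ≠ c := by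
        intro e
        rw [e] at hk₂
        exact hk₂ hc
      have h2 := hd.symm_add hne
      have h3 := hd.symm_add hxc
      have : zd x c < k₂ := by
        by_contra hge
        exact hk₂ (h1 _ hne (by omega))
      omega
  · rcases lt_or_ge (zd a x) k₂ with h1 | h1
    · have h2 : zd x c < k₂ := by
        have := hd.tri a x c
        have := hd.lt x c
        omega
      have := hm₂ _ h2
      have e : c - ((zd x c : ℕ) : ZMod n) = x := by
        simp [zd]
      rwa [e] at this
    · have h2 : zd c x < k₁ := by
        have := hd.tri a c x
        have := hd.lt c x
        omega
      have := hm₁ _ h2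
      rwa [add_zd] at this

lemma finEquiv_val {n : ℕ} [NeZero n] (i : Fin n) : (ZMod.finEquiv n i).val = i.val := by
  cases n with
  | zero => exact i.elim0
  | succ n => rfl

lemma zd_le_zd_iff {n : ℕ} [NeZero n] (u x y : ZMod n) : zd u x ≤ zd u y ↔
    (u.val ≤ x.val ∧ (x.val ≤ y.val ∨ y.val < u.val)) ∨
      (x.val < u.val ∧ y.val < u.val ∧ x.val ≤ y.val) := by
  have hd := zd_cyc n
  have hx := hd.tri 0 u x
  have hy := hd.tri 0 u y
  have h1 := hd.lt u x
  have h2 := hd.lt u y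
  have h3 := ZMod.val_lt x
  have h4 := ZMod.val_lt y
  have key : ∀ a : ZMod n, zd 0 a = a.val := fun a => by simp [zd]
  simp only [key] at hx hy
  omega

/-- The vertices can be placed on `ZMod (card V)` in the circular order of given distinct points. -/
lemma exists_cyclic_sort {V : Type*} [Fintype V] {N : ℕ} [NeZero N] [NeZero (Fintype.card V)]
    (s : V → ZMod N) (hs : Function.Injective s) :
    ∃ f : V ≃ ZMod (Fintype.card V), ∀ u x y,
      zd (f u) (f x) ≤ zd (f u) (f y) ↔ zd (s u) (s x) ≤ zd (s u) (s y) := by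
  classical
  let S : V → ℕ := fun v => (s v).val
  have hS : Function.Injective S := (ZMod.val_injective N).comp hs
  let _ : LinearOrder V := LinearOrder.lift' S hS
  let o : Fin (Fintype.card V) ≃o V := Fintype.orderIsoFinOfCardEq V rfl
  let g : Fin (Fintype.card V) ≃ ZMod (Fintype.card V) :=
    (ZMod.finEquiv (Fintype.card V)).toEquiv
  let f : V ≃ ZMod (Fintype.card V) := o.symm.toEquiv.trans g
  have hval : ∀ v, (f v).val = (o.symm v).val := by
    intro v
    exact finEquiv_val _
  have hlt : ∀ x y, (f x).val < (f y).val ↔ (s x).val < (s y).val := by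
    intro x y
    rw [hval, hval, Fin.val_fin_lt, o.symm.lt_iff_lt]
    exact Iff.rfl
  refine ⟨f, fun u x y => ?_⟩
  rw [zd_le_zd_iff, zd_le_zd_iff]
  simp only [← not_lt, hlt]

lemma PCA_to_arcOrdering {V : Type*} [Fintype V] [NeZero (Fintype.card V)] (G : SimpleGraph V)
    (hnb : ¬ IsBipartite Gᶜ) (h : IsPCAGraph G) :
    ∃ f : V ≃ ZMod (Fintype.card V), ∀ v, IsArc (Fintype.card V) (f '' ClosedNbhd G v) := by
  obtain ⟨N, hN, l, -, hl, hinc, hadj⟩ := h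
  have : NeZero N := ⟨hN.ne'⟩
  have C := zd_cyc N
  have hl' : ∀ v, ∃ a k, 0 < k ∧ k ≤ N ∧ ∀ x, x ∈ l v ↔ zd a x < k := by
    intro v
    obtain ⟨⟨y, hy⟩, harc⟩ := hl v
    obtain ⟨a, k, hk, hx⟩ := (isArc_iff _).1 harc
    exact ⟨a, k, (Nat.zero_le _).trans_lt ((hx y).1 hy), hk, hx⟩
  choose s k hk0 hkN hmem using hl'
  -- an arc of full length would contain all others, leaving a single vertex
  have hkN' : ∀ v, k v < N := by
    intro v
    refine lt_of_le_of_ne (hkN v) fun e => hnb ?_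
    have hall : ∀ u, u = v := by
      intro u
      by_contra hne
      exact hinc u v hne fun x _ => (hmem v x).2 ((C.lt _ _).trans_eq e.symm)
    refine ⟨univ, fun a _ b _ hab => hab.ne ((hall a).trans (hall b).symm), fun a ha => ?_⟩
    exact (ha (mem_univ a)).elim
  -- an arc that starts inside another arc ends outside of it
  have hprop : ∀ u w, u ≠ w → k u < zd (s u) (s w) + k w ∨ k u ≤ zd (s u) (s w) := by
    intro u w huw
    by_contra hc
    refine hinc w u huw.symm fun x hx => ?_
    rw [hmem] at hx ⊢
    have := C.tri (s u) (s w) x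
    have := C.lt (s u) x
    omega
  have hs : Function.Injective s := by
    intro u v e
    by_contra hne
    have h1 := hprop u v hne
    have h2 := hprop v u (Ne.symm hne)
    rw [e, C.self] at h1 h2
    have := hk0 u
    have := hk0 v
    omega
  obtain ⟨f, hf⟩ := exists_cyclic_sort s hs
  refine ⟨f, fun v => ?_⟩
  have hN' : ∀ u, u ∈ ClosedNbhd G v ↔ zd (s v) (s u) < k v ∨ zd (s u) (s v) < k u := by
    intro u
    rw [← arcs_inter (hk0 v) (hk0 u)]
    by_cases huv : u = v
    · subst huv
      refine ⟨fun _ => ⟨s u, ?_, ?_⟩, fun _ => self_mem_closedNbhd u⟩ <;>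
        rw [C.self] <;> exact hk0 u
    · have h1 : u ∈ ClosedNbhd G v ↔ G.Adj v u := by
        simp only [ClosedNbhd, mem_ofPred_eq, huv, false_or]
        exact G.adj_comm u v
      rw [h1, hadj v u (Ne.symm huv)]
      simp only [Set.Nonempty, mem_inter_iff, hmem]
  refine isArc_of_star _ (f v) (mem_image_of_mem f (self_mem_closedNbhd v)) ?_
  rintro _ ⟨b, hb, rfl⟩
  rw [hN'] at hb
  rcases hb with hb | hb
  · left
    intro y hy
    obtain ⟨w, rfl⟩ := f.surjective y
    rw [hf] at hy
    exact mem_image_of_mem f ((hN' w).2 (Or.inl (by omega)))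
  · by_cases hbv : b = v
    · subst hbv
      left
      intro y hy
      rw [(zd_cyc _).self] at hy
      rw [← (zd_cyc _).eq_of_zero _ _ (Nat.le_zero.1 hy)]
      exact mem_image_of_mem f (self_mem_closedNbhd b)
    right
    intro y hyv hy
    obtain ⟨w, rfl⟩ := f.surjective y
    rw [hf] at hy
    have hwv : w ≠ v := fun e => hyv (e ▸ rfl)
    refine mem_image_of_mem f ((hN' w).2 (Or.inr ?_))
    by_cases hbw : b = w
    · exact hbw ▸ hb
    have := hprop b w hbw
    have := C.tri (s b) (s w) (s v)
    have := C.symm_add (fun e => hwv (hs e) : s w ≠ s v)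
    have := C.symm_add (fun e => hbv (hs e) : s b ≠ s v)
    have := C.lt (s b) (s w)
    omega

/-- Tucker. For a finite simple graph `G` whose complement is not
bipartite, `N[G]` is a circular-arc hypergraph iff `G` is a proper circular-arc graph. -/
theorem stmt3 {V : Type*} [Fintype V] (G : SimpleGraph V)
    (hnb : ¬ IsBipartite Gᶜ) :
    (∃ f : V ≃ ZMod (Fintype.card V),
      ∀ v, IsArc (Fintype.card V) (f '' ClosedNbhd G v)) ↔ IsPCAGraph G := by
  have hne : Nonempty V := by
    by_contra hV
    rw [not_nonempty_iff] at hV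
    exact hnb ⟨∅, fun u => isEmptyElim u, fun u => isEmptyElim u⟩
  have : NeZero (Fintype.card V) := ⟨Fintype.card_ne_zero⟩
  exact ⟨fun ⟨f, hf⟩ => arcOrdering_to_PCA G hnb f hf, PCA_to_arcOrdering G hnb⟩
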